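/- arXiv:2407.15547 — 2 statements merged into one kernel-verified Lean document; each statement's English description precedes it below -/
import Mathlib

section
/- Let α < 0. For every τ ∈ V_α with associated analytic extension F of its Laplace transform to the half-plane Re s > α, every α' with α < α' < 0, every r > 0, and every ε > 0, there exists σ ∈ V_{-∞}, with entire extension G, such that sup_{x≥0}|τ'(x) − σ'(x)| + sup_{s∈R̄_{α',r}} |F(s) − G(s)| < ε. That is, V_{-∞} is dense in the Fréchet space V_α. -/
/-!
Approximate `τ` by the damped functions `x ↦ exp (-(t * x) ^ 2) * τ x` with `t → 0`, whose Laplace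
transforms are entire.

Since `τ' → 0` forces `τ x = o(x)`, the derivatives of the damped functions are bounded, uniformly
in `t`, by a function that vanishes at infinity, so they converge to `τ'` uniformly on `[0, ∞)`.

On the transform side, completing the square shows that the damped transform at `s` is the integral
of `L{τ; s + w}` over a line `Re w = d` against the kernel `exp (w ^ 2 / (4 * t ^ 2))`, normalized
to total mass `1`. On that line the absolute mass of the kernel, `exp (d ^ 2 / (4 * t ^ 2))`, blows
up as `t → 0`, so one uses the continuation `F` to move the part `|Im w| ≤ R` of the contour to the
imaginary axis, where the kernel is an approximate identity. If `R > d`, then the kernel is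
exponentially small on everything left over: the two horizontal segments and the tails `|Im w| > R`
of the original line. The resulting error is `O(t)`, uniformly for `s` in the rectangle.
-/

open Filter Set MeasureTheory

/-- The Laplace transform `L{f;s} = ∫_0^∞ f(x) e^{-sx} dx`. -/
noncomputable def Laplace (f : ℝ → ℂ) (s : ℂ) : ℂ :=
  ∫ x in Set.Ioi (0 : ℝ), f x * Complex.exp (-(s * (x : ℂ)))

/-- The closed rectangle `R̄_{α,r} = {s : α ≤ Re s ≤ 1, |Im s| ≤ r}`. -/
def Rbar (α r : ℝ) : Set ℂ := {s : ℂ | α ≤ s.re ∧ s.re ≤ 1 ∧ |s.im| ≤ r}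

open scoped Topology

section GaussianDamping

variable {E : Type*} [NormedAddCommGroup E]

theorem tendstoUniformlyOn_Ici_of_continuousOn_uncurry {ι : Type*} [TopologicalSpace ι]
    {g : ι → ℝ → E} {φ : ℝ → ℝ} {a : ℝ} (hg : ContinuousOn g.uncurry (univ ×ˢ Ici a))
    (hφ : Tendsto φ atTop (𝓝 0)) (hgφ : ∀ᶠ x in atTop, ∀ t, ‖g t x‖ ≤ φ x) (t₀ : ι) :
    TendstoUniformlyOn g (g t₀) (𝓝 t₀) (Ici a) := by
  rw [Metric.tendstoUniformlyOn_iff]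
  intro ε hε
  obtain ⟨X, hX⟩ := eventually_atTop.1 (hgφ.and (hφ.eventually_lt_const (half_pos hε)))
  obtain ⟨v, hv, hclose⟩ := isCompact_Icc.mem_uniformity_of_prod (k := Icc a X)
    (hg.mono (prod_mono_right Icc_subset_Ici_self)) (mem_univ t₀) (Metric.dist_mem_uniformity hε)
  rw [nhdsWithin_univ] at hv
  filter_upwards [hv] with t ht x hx
  rcases le_total x X with hxX | hXx
  · rw [dist_comm]
    exact hclose t ht x ⟨hx, hxX⟩
  · obtain ⟨hgx, hφx⟩ := hX x hXx
    calc dist (g t₀ x) (g t x) ≤ ‖g t₀ x‖ + ‖g t x‖ := dist_le_norm_add_norm _ _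
      _ < ε := by linarith [hgx t₀, hgx t]

theorem tendsto_norm_add_two_mul_norm_div_norm {f f' : ℝ → E}
    (hf : f =o[atTop] (id : ℝ → ℝ))
    (hf' : Tendsto f' atTop (𝓝 0)) :
    Tendsto (fun x => ‖f' x‖ + 2 * (‖f x‖ / ‖x‖)) atTop (𝓝 0) := by
  simpa using hf'.norm.add (hf.norm_norm.tendsto_div_nhds_zero.const_mul 2)

variable [NormedSpace ℝ E]

theorem isLittleO_id_of_tendsto_deriv_zero {f f' : ℝ → E} {a : ℝ}
    (hf : ∀ x ∈ Ici a, HasDerivWithinAt f (f' x) (Ici a) x) (hf' : Tendsto f' atTop (𝓝 0)) :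
    f =o[atTop] (id : ℝ → ℝ) := by
  rw [Asymptotics.isLittleO_iff]
  intro c hc
  have hsmall : ∀ᶠ X in atTop, ∀ y ≥ X, ‖f' y‖ ≤ c / 2 :=
    eventually_forall_ge_atTop.2 (hf'.norm.eventually_le_const (by simpa using half_pos hc))
  obtain ⟨X, hX, haX, hX0⟩ :=
    (hsmall.and ((eventually_ge_atTop a).and (eventually_ge_atTop 0))).exists
  have hconst : (fun _ => f X) =o[atTop] (id : ℝ → ℝ) :=
    Asymptotics.isLittleO_const_left.2 (.inr tendsto_norm_atTop_atTop)
  filter_upwards [hconst.bound (half_pos hc), eventually_ge_atTop X] with x hfX hx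
  have hincr : ‖f x - f X‖ ≤ c / 2 * ‖x - X‖ :=
    (convex_Ici X).norm_image_sub_le_of_norm_hasDerivWithin_le
      (fun y hy => (hf y (haX.trans hy)).mono (Ici_subset_Ici.2 haX)) hX self_mem_Ici hx
  have hdist : ‖x - X‖ ≤ ‖x‖ := by
    rw [Real.norm_of_nonneg (sub_nonneg.2 hx), Real.norm_of_nonneg (hX0.trans hx)]
    exact sub_le_self x hX0
  calc ‖f x‖ = ‖(f x - f X) + f X‖ := by rw [sub_add_cancel]
    _ ≤ c / 2 * ‖x‖ + c / 2 * ‖x‖ :=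
      (norm_add_le _ _).trans (add_le_add (hincr.trans (by gcongr)) hfX)
    _ = c * ‖x‖ := by ring

/-- The function `x ↦ exp (-(t * x) ^ 2) • f x`, which decays faster than every exponential when
`t ≠ 0` and converges to `f` as `t → 0`. -/
noncomputable def gaussianDamp (t : ℝ) (f : ℝ → E) (x : ℝ) : E :=
  Real.exp (-(t * x) ^ 2) • f x

/-- The derivative of `gaussianDamp t f` when `f'` is the derivative of `f`. -/
noncomputable def gaussianDampDeriv (t : ℝ) (f f' : ℝ → E) (x : ℝ) : E :=
  gaussianDamp t f' x - (2 * t ^ 2 * x) • gaussianDamp t f x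

variable {f f' : ℝ → E} {s : Set ℝ}

theorem norm_gaussianDamp (t : ℝ) (f : ℝ → E) (x : ℝ) :
    ‖gaussianDamp t f x‖ = Real.exp (-(t * x) ^ 2) * ‖f x‖ := by
  rw [gaussianDamp, norm_smul, Real.norm_of_nonneg (Real.exp_pos _).le]

theorem hasDerivWithinAt_gaussianDamp {x : ℝ} (hf : HasDerivWithinAt f (f' x) s x) (t : ℝ) :
    HasDerivWithinAt (gaussianDamp t f) (gaussianDampDeriv t f f' x) s x := by
  have hexp : HasDerivAt (fun y : ℝ => Real.exp (-(t * y) ^ 2))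
      (Real.exp (-(t * x) ^ 2) * -(2 * t ^ 2 * x)) x := by
    convert! (((hasDerivAt_id' x).const_mul t).fun_pow 2).fun_neg.exp using 1
    ring
  convert! hexp.hasDerivWithinAt.smul hf using 1
  simp only [gaussianDampDeriv, gaussianDamp, smul_smul]
  module

theorem continuousOn_uncurry_gaussianDamp (hf : ContinuousOn f s) :
    ContinuousOn (Function.uncurry fun t => gaussianDamp t f) (univ ×ˢ s) :=
  ContinuousOn.smul (by fun_prop) (hf.comp continuousOn_snd fun _ hp => hp.2)

theorem continuousOn_uncurry_gaussianDampDeriv (hf : ContinuousOn f s) (hf' : ContinuousOn f' s) :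
    ContinuousOn (Function.uncurry fun t => gaussianDampDeriv t f f') (univ ×ˢ s) :=
  (continuousOn_uncurry_gaussianDamp hf').sub
    (ContinuousOn.smul (by fun_prop) (continuousOn_uncurry_gaussianDamp hf))

theorem continuousOn_gaussianDampDeriv (hf : ContinuousOn f s) (hf' : ContinuousOn f' s) (t : ℝ) :
    ContinuousOn (gaussianDampDeriv t f f') s :=
  (continuousOn_uncurry_gaussianDampDeriv hf hf').uncurry_left t (mem_univ t)

theorem norm_gaussianDampDeriv_le (t : ℝ) (f f' : ℝ → E) {x : ℝ} (hx : x ≠ 0) :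
    ‖gaussianDampDeriv t f f' x‖ ≤ ‖f' x‖ + 2 * (‖f x‖ / ‖x‖) := by
  have hdamp : ‖gaussianDamp t f' x‖ ≤ ‖f' x‖ := by
    rw [norm_gaussianDamp]
    exact mul_le_of_le_one_left (norm_nonneg _) (Real.exp_le_one_iff.2 (by nlinarith))
  have hweight : (t * x) ^ 2 * Real.exp (-(t * x) ^ 2) ≤ 1 :=
    (Real.mul_exp_neg_le_exp_neg_one _).trans (Real.exp_le_one_iff.2 (by simp))
  have hdrift : ‖(2 * t ^ 2 * x) • gaussianDamp t f x‖ ≤ 2 * (‖f x‖ / ‖x‖) :=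
    calc ‖(2 * t ^ 2 * x) • gaussianDamp t f x‖
        = 2 * ((t * x) ^ 2 * Real.exp (-(t * x) ^ 2)) * (‖f x‖ / ‖x‖) := by
          rw [norm_smul, norm_gaussianDamp, norm_mul, Real.norm_of_nonneg (by positivity)]
          have : ‖x‖ ≠ 0 := norm_ne_zero_iff.2 hx
          field_simp
          rw [Real.norm_eq_abs, sq_abs]
      _ ≤ 2 * 1 * (‖f x‖ / ‖x‖) := by gcongr
      _ = 2 * (‖f x‖ / ‖x‖) := by rw [mul_one]
  exact (norm_sub_le _ _).trans (add_le_add hdamp hdrift)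

theorem tendsto_gaussianDampDeriv_atTop (hf : f =o[atTop] (id : ℝ → ℝ))
    (hf' : Tendsto f' atTop (𝓝 0)) (t : ℝ) :
    Tendsto (gaussianDampDeriv t f f') atTop (𝓝 0) :=
  squeeze_zero_norm'
    ((eventually_ne_atTop 0).mono fun _ hx => norm_gaussianDampDeriv_le t f f' hx)
    (tendsto_norm_add_two_mul_norm_div_norm hf hf')

theorem tendstoUniformlyOn_gaussianDampDeriv (hf_cont : ContinuousOn f (Ici 0))
    (hf : f =o[atTop] (id : ℝ → ℝ)) (hf'_cont : ContinuousOn f' (Ici 0))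
    (hf' : Tendsto f' atTop (𝓝 0)) :
    TendstoUniformlyOn (fun t => gaussianDampDeriv t f f') f' (𝓝 0) (Ici 0) := by
  have hzero : gaussianDampDeriv 0 f f' = f' := by
    ext x
    simp [gaussianDampDeriv, gaussianDamp]
  simpa only [hzero] using tendstoUniformlyOn_Ici_of_continuousOn_uncurry
    (continuousOn_uncurry_gaussianDampDeriv hf_cont hf'_cont)
    (tendsto_norm_add_two_mul_norm_div_norm hf hf')
    ((eventually_ne_atTop 0).mono fun _ hx t => norm_gaussianDampDeriv_le t f f' hx) 0

end GaussianDamping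


section LaplaceTransform

variable {f : ℝ → ℂ} {s s₀ : ℂ}

/-- Absolute convergence of the integral that defines `Laplace f s`; where it fails, `Laplace f s`
is the junk value `0`. -/
def LaplaceConvergent (f : ℝ → ℂ) (s : ℂ) : Prop :=
  IntegrableOn (fun x : ℝ => f x * Complex.exp (-(s * x))) (Ioi 0)

theorem norm_exp_neg_mul_ofReal (s : ℂ) (x : ℝ) :
    ‖Complex.exp (-(s * x))‖ = Real.exp (-(s.re * x)) := by
  simp [Complex.norm_exp]

theorem norm_laplace_le (f : ℝ → ℂ) (s : ℂ) :
    ‖Laplace f s‖ ≤ ∫ x in Ioi (0 : ℝ), ‖f x‖ * Real.exp (-(s.re * x)) := by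
  simpa only [Laplace, norm_mul, norm_exp_neg_mul_ofReal] using
    norm_integral_le_integral_norm (μ := volume.restrict (Ioi 0))
      fun x : ℝ => f x * Complex.exp (-(s * x))

theorem laplaceConvergent_of_isBigO_id (hf : ContinuousOn f (Ici 0))
    (hfO : f =O[atTop] (id : ℝ → ℝ)) (hs : 0 < s.re) : LaplaceConvergent f s := by
  have hhalf : 0 < s.re / 2 := half_pos hs
  have hgrowth : f =O[atTop] fun x => Real.exp (s.re / 2 * x) :=
    hfO.trans ((isLittleO_pow_exp_pos_mul_atTop 1 hhalf).isBigO.congr_left pow_one)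
  have hkernel : (fun x : ℝ => Complex.exp (-(s * x))) =O[atTop] fun x => Real.exp (-(s.re * x)) :=
    .of_norm_eventuallyLE (.of_forall fun x => (norm_exp_neg_mul_ofReal s x).le)
  have hdecay : (fun x : ℝ => f x * Complex.exp (-(s * x)))
      =O[atTop] fun x => Real.exp (-(s.re / 2) * x) := by
    refine (hgrowth.mul hkernel).congr_right fun x => ?_
    rw [← Real.exp_add]
    ring_nf
  have hcont : ContinuousOn (fun x : ℝ => f x * Complex.exp (-(s * x))) (Ici 0) :=
    hf.mul (by fun_prop)
  exact ((hcont.locallyIntegrableOn measurableSet_Ici).integrableOn_of_isBigO_atTop hdecay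
    ⟨Ioi 0, Ioi_mem_atTop 0, exp_neg_integrableOn_Ioi 0 hhalf⟩).mono_set Ioi_subset_Ici_self

theorem LaplaceConvergent.of_eq_mul {g : ℝ → ℂ} {w : ℝ → ℂ} {C : ℝ}
    (hf : LaplaceConvergent f s₀) (hw : ContinuousOn w (Ioi 0)) (hwC : ∀ x ∈ Ioi 0, ‖w x‖ ≤ C)
    (hg : ∀ x : ℝ, g x * Complex.exp (-(s * x)) = w x * (f x * Complex.exp (-(s₀ * x)))) :
    LaplaceConvergent g s := by
  simp only [LaplaceConvergent, hg]
  exact Integrable.bdd_mul hf (hw.aestronglyMeasurable measurableSet_Ioi)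
    ((ae_restrict_iff' measurableSet_Ioi).2 (.of_forall hwC))

theorem LaplaceConvergent.mono (hf : LaplaceConvergent f s₀) (hs : s₀.re ≤ s.re) :
    LaplaceConvergent f s := by
  refine hf.of_eq_mul (w := fun x => Complex.exp (-((s - s₀) * x))) (C := 1)
    (by fun_prop) (fun x hx => ?_) fun x => ?_
  · rw [norm_exp_neg_mul_ofReal, Real.exp_le_one_iff, Left.neg_nonpos_iff, Complex.sub_re]
    exact mul_nonneg (sub_nonneg.2 hs) (le_of_lt hx)
  · rw [mul_left_comm, ← Complex.exp_add]
    ring_nf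

theorem laplaceConvergent_gaussianDamp (hf : LaplaceConvergent f s₀) {t : ℝ} (ht : t ≠ 0) (s : ℂ) :
    LaplaceConvergent (gaussianDamp t f) s := by
  set q : ℝ := (s - s₀).re / (2 * t) with hq
  refine hf.of_eq_mul (w := fun x => Real.exp (-(t * x) ^ 2) * Complex.exp (-((s - s₀) * x)))
    (C := Real.exp (q ^ 2)) (by fun_prop) (fun x _ => ?_) fun x => ?_
  · rw [norm_mul, norm_exp_neg_mul_ofReal, Complex.norm_real, Real.norm_of_nonneg (by positivity),
      ← Real.exp_add, Real.exp_le_exp]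
    calc -(t * x) ^ 2 + -((s - s₀).re * x) = q ^ 2 - (t * x + q) ^ 2 := by
          rw [hq]
          field_simp
          ring
      _ ≤ q ^ 2 := sub_le_self _ (sq_nonneg _)
  · rw [gaussianDamp, Complex.real_smul, mul_mul_mul_comm, mul_assoc, mul_left_comm _ (f x),
      ← Complex.exp_add]
    ring_nf

theorem norm_mul_exp_neg_mul_le {ρ : ℝ} (hρ : 0 < ρ) (hs : s₀.re + ρ ≤ s.re) {x : ℝ} (hx : 0 ≤ x)
    (c : ℂ) :
    ‖c * (Complex.exp (-(s * x)) * -x)‖ ≤ ρ⁻¹ * ‖c * Complex.exp (-(s₀ * x))‖ := by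
  have hweight : x * Real.exp (-(ρ * x)) ≤ ρ⁻¹ := by
    rw [← mul_le_mul_iff_of_pos_left hρ, mul_inv_cancel₀ hρ.ne', ← mul_assoc]
    exact (Real.mul_exp_neg_le_exp_neg_one _).trans (Real.exp_le_one_iff.2 (by simp))
  simp only [norm_mul, norm_neg, norm_exp_neg_mul_ofReal, Complex.norm_real,
    Real.norm_of_nonneg hx]
  calc ‖c‖ * (Real.exp (-(s.re * x)) * x)
      ≤ ‖c‖ * (Real.exp (-((s₀.re + ρ) * x)) * x) := by gcongr
    _ = x * Real.exp (-(ρ * x)) * (‖c‖ * Real.exp (-(s₀.re * x))) := by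
        rw [add_mul, neg_add, Real.exp_add]
        ring
    _ ≤ ρ⁻¹ * (‖c‖ * Real.exp (-(s₀.re * x))) := by gcongr

theorem LaplaceConvergent.differentiableAt (hf : LaplaceConvergent f s₀) (hs : s₀.re < s.re) :
    DifferentiableAt ℂ (Laplace f) s := by
  set ρ : ℝ := (s.re - s₀.re) / 2 with hρ_def
  have hρ : 0 < ρ := half_pos (sub_pos.2 hs)
  have hball : ∀ z ∈ Metric.ball s ρ, s₀.re + ρ ≤ z.re := fun z hz => by
    have hre : |z.re - s.re| < ρ :=
      (Complex.abs_re_le_norm (z - s)).trans_lt (mem_ball_iff_norm.1 hz)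
    linarith [neg_abs_le (z.re - s.re)]
  have hint : ∀ z ∈ Metric.ball s ρ, LaplaceConvergent f z := fun z hz =>
    hf.mono (le_of_add_le_of_nonneg_left (hball z hz) hρ.le)
  have hs_mem : s ∈ Metric.ball s ρ := Metric.mem_ball_self hρ
  refine (hasDerivAt_integral_of_dominated_loc_of_deriv_le (x₀ := s)
    (F := fun z (x : ℝ) => f x * Complex.exp (-(z * x)))
    (F' := fun z (x : ℝ) => f x * (Complex.exp (-(z * x)) * -x))
    (bound := fun x => ρ⁻¹ * ‖f x * Complex.exp (-(s₀ * x))‖)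
    (Metric.ball_mem_nhds s hρ) ?_ (hint s hs_mem) ?_ ?_ (hf.norm.const_mul _)
    ?_).2.differentiableAt
  · filter_upwards [Metric.ball_mem_nhds s hρ] with z hz
    exact (hint z hz).aestronglyMeasurable
  · simp only [← mul_assoc]
    exact (hint s hs_mem).aestronglyMeasurable.mul (by fun_prop)
  · exact (ae_restrict_iff' measurableSet_Ioi).2 <| .of_forall fun x hx z hz =>
      norm_mul_exp_neg_mul_le hρ (hball z hz) (le_of_lt hx) (f x)
  · refine .of_forall fun x z _ => ?_
    simpa using ((hasDerivAt_mul_const (x : ℂ) (x := z)).neg.cexp).const_mul (f x)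

theorem differentiable_laplace_gaussianDamp (hf : LaplaceConvergent f s₀) {t : ℝ}
    (ht : t ≠ 0) : Differentiable ℂ (Laplace (gaussianDamp t f)) := fun s =>
  (laplaceConvergent_gaussianDamp hf ht (s - 1)).differentiableAt (by simp)

end LaplaceTransform

theorem integrable_abs_mul_exp_neg_mul_sq {b : ℝ} (hb : 0 < b) :
    Integrable fun v : ℝ => |v| * Real.exp (-b * v ^ 2) := by
  simpa only [norm_mul, Real.norm_eq_abs, Real.abs_exp] using
    (integrable_mul_exp_neg_mul_sq hb).norm

theorem integral_abs_mul_exp_neg_mul_sq {b : ℝ} (hb : 0 < b) :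
    ∫ v : ℝ, |v| * Real.exp (-b * v ^ 2) = b⁻¹ := by
  have hhalf : ∫ v in Ioi (0 : ℝ), v * Real.exp (-b * v ^ 2) = (2 * b)⁻¹ := by
    rw [← Complex.ofReal_inj, ← integral_complex_ofReal]
    push_cast
    exact integral_mul_cexp_neg_mul_sq (b := b) (by simpa using hb)
  have heven := integral_comp_abs (f := fun v : ℝ => v * Real.exp (-b * v ^ 2))
  simp only [sq_abs] at heven
  rw [heven, hhalf]
  field_simp

theorem integrable_exp_sub_sq (a : ℝ) : Integrable fun v : ℝ => Real.exp (a - v ^ 2) := by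
  simpa [sub_eq_add_neg, Real.exp_add] using
    (integrable_exp_neg_mul_sq one_pos).const_mul (Real.exp a)

theorem integral_exp_sub_sq (a : ℝ) :
    ∫ v : ℝ, Real.exp (a - v ^ 2) = Real.exp a * √Real.pi := by
  simpa [sub_eq_add_neg, Real.exp_add, integral_const_mul] using integral_gaussian 1

theorem norm_integral_le_norm_intervalIntegral_add {E : Type*} [NormedAddCommGroup E]
    [NormedSpace ℝ E] {g : ℝ → E} {φ : ℝ → ℝ} {a b : ℝ} (hab : a ≤ b) (hg : Integrable g)
    (hφ : Integrable φ) (hφ₀ : 0 ≤ φ) (hgφ : ∀ v ∉ Ioc a b, ‖g v‖ ≤ φ v) :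
    ‖∫ v, g v‖ ≤ ‖∫ v in a..b, g v‖ + ∫ v, φ v := by
  rw [← integral_add_compl (measurableSet_Ioc (a := a) (b := b)) hg,
    ← intervalIntegral.integral_of_le hab]
  refine norm_add_le_of_le le_rfl ?_
  calc ‖∫ v in (Ioc a b)ᶜ, g v‖ ≤ ∫ v in (Ioc a b)ᶜ, φ v :=
        norm_integral_le_of_norm_le hφ.integrableOn
          ((ae_restrict_iff' measurableSet_Ioc.compl).2 (.of_forall hgφ))
    _ ≤ ∫ v, φ v := setIntegral_le_integral hφ (.of_forall hφ₀)

theorem norm_verticalIntegral_le_add {E : Type*} [NormedAddCommGroup E] [NormedSpace ℂ E]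
    {g : ℂ → E} {a b y₁ y₂ C : ℝ} (hab : a ≤ b) (hy : y₁ ≤ y₂)
    (hg : DifferentiableOn ℂ g (Icc a b ×ℂ Icc y₁ y₂))
    (hC₁ : ∀ x ∈ Icc a b, ‖g (x + y₁ * Complex.I)‖ ≤ C)
    (hC₂ : ∀ x ∈ Icc a b, ‖g (x + y₂ * Complex.I)‖ ≤ C) :
    ‖∫ y in y₁..y₂, g (b + y * Complex.I)‖ ≤
      ‖∫ y in y₁..y₂, g (a + y * Complex.I)‖ + 2 * C * (b - a) := by
  have hhorizontal : ∀ y : ℝ, (∀ x ∈ Icc a b, ‖g (x + y * Complex.I)‖ ≤ C) →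
      ‖∫ x in a..b, g (x + y * Complex.I)‖ ≤ C * (b - a) := fun y hy => by
    rw [← abs_of_nonneg (sub_nonneg.2 hab)]
    refine intervalIntegral.norm_integral_le_of_norm_le_const fun x hx => hy x ?_
    exact Ioc_subset_Icc_self (uIoc_of_le hab ▸ hx)
  have hcauchy := Complex.integral_boundary_rect_eq_zero_of_differentiableOn g ⟨a, y₁⟩ ⟨b, y₂⟩
    (by simpa only [uIcc_of_le hab, uIcc_of_le hy] using hg)
  have hshift : Complex.I • ∫ y in y₁..y₂, g (b + y * Complex.I) =
      Complex.I • (∫ y in y₁..y₂, g (a + y * Complex.I)) +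
        ((∫ x in a..b, g (x + y₂ * Complex.I)) - ∫ x in a..b, g (x + y₁ * Complex.I)) := by
    linear_combination (norm := module) hcauchy
  calc ‖∫ y in y₁..y₂, g (b + y * Complex.I)‖
      = ‖Complex.I • ∫ y in y₁..y₂, g (b + y * Complex.I)‖ := by simp [norm_smul]
    _ ≤ ‖Complex.I • ∫ y in y₁..y₂, g (a + y * Complex.I)‖ + (C * (b - a) + C * (b - a)) := by
        rw [hshift]
        exact norm_add_le_of_le le_rfl
          (norm_sub_le_of_le (hhorizontal y₂ hC₂) (hhorizontal y₁ hC₁))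
    _ = ‖∫ y in y₁..y₂, g (a + y * Complex.I)‖ + 2 * C * (b - a) := by
        rw [norm_smul, Complex.norm_I, one_mul]
        ring

theorem one_le_sqrt_pi : 1 ≤ √Real.pi :=
  Real.one_le_sqrt.2 (by linarith [Real.pi_gt_three])

section GaussianKernel

/-- The Gaussian of variance `2 * t ^ 2` on the imaginary axis, normalized to total mass `1` there
and continued to an entire function: multiplying `f` by `exp (-(t * x) ^ 2)` amounts to convolving
its Laplace transform with this kernel along vertical lines. -/
noncomputable def gaussianKernel (t : ℝ) (w : ℂ) : ℂ :=
  Complex.exp (w ^ 2 / (4 * t ^ 2)) / (2 * t * √Real.pi : ℝ)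

variable {t : ℝ}

@[fun_prop]
theorem differentiable_gaussianKernel (t : ℝ) : Differentiable ℂ (gaussianKernel t) := by
  unfold gaussianKernel
  fun_prop

theorem norm_gaussianKernel (ht : 0 < t) (w : ℂ) :
    ‖gaussianKernel t w‖ =
      Real.exp ((w.re ^ 2 - w.im ^ 2) / (4 * t ^ 2)) / (2 * t * √Real.pi) := by
  have hre : (w ^ 2 / (4 * t ^ 2)).re = (w.re ^ 2 - w.im ^ 2) / (4 * t ^ 2) := by
    rw [show (4 * t ^ 2 : ℂ) = (4 * t ^ 2 : ℝ) by push_cast; rfl, Complex.div_ofReal_re, sq w,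
      Complex.mul_re, sq w.re, sq w.im]
  rw [gaussianKernel, norm_div, Complex.norm_exp, hre, Complex.norm_real,
    Real.norm_of_nonneg (by positivity)]

theorem gaussianKernel_mul_exp (ht : t ≠ 0) (w : ℂ) (x : ℝ) :
    gaussianKernel t w * Complex.exp (-(w * x)) =
      gaussianKernel t (w - 2 * t ^ 2 * x) * Real.exp (-(t * x) ^ 2) := by
  have ht' : (t : ℂ) ≠ 0 := mod_cast ht
  rw [gaussianKernel, gaussianKernel, div_mul_eq_mul_div, div_mul_eq_mul_div, Complex.ofReal_exp,
    ← Complex.exp_add, ← Complex.exp_add]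
  congr 2
  push_cast
  field_simp
  ring

theorem gaussianKernel_vertical (t d v : ℝ) :
    gaussianKernel t (d + v * Complex.I) =
      Complex.exp (-(1 / (4 * t ^ 2) : ℝ) * (v + (-d : ℝ) * Complex.I) ^ 2) /
        (2 * t * √Real.pi : ℝ) := by
  rw [gaussianKernel]
  congr 2
  push_cast
  linear_combination (v ^ 2 + d ^ 2 : ℂ) / (4 * t ^ 2) * Complex.I_sq

theorem integrable_gaussianKernel_vertical (ht : 0 < t) (d : ℝ) :
    Integrable fun v : ℝ => gaussianKernel t (d + v * Complex.I) := by
  simp only [gaussianKernel_vertical]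
  exact (GaussianFourier.integrable_cexp_neg_mul_sq_add_real_mul_I
    (by rw [Complex.ofReal_re]; positivity) _).div_const _

theorem integral_gaussianKernel_vertical (ht : 0 < t) (d : ℝ) :
    ∫ v : ℝ, gaussianKernel t (d + v * Complex.I) = 1 := by
  have hmass : √(Real.pi / (1 / (4 * t ^ 2))) = 2 * t * √Real.pi := by
    rw [show Real.pi / (1 / (4 * t ^ 2)) = (2 * t) ^ 2 * Real.pi by field_simp; ring,
      Real.sqrt_mul (sq_nonneg _), Real.sqrt_sq (by positivity)]
  have hmass_ne : ((2 * t * √Real.pi : ℝ) : ℂ) ≠ 0 := Complex.ofReal_ne_zero.2 (by positivity)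
  simp only [gaussianKernel_vertical]
  rw [integral_div, GaussianFourier.integral_cexp_neg_mul_sq_add_real_mul_I
    (by rw [Complex.ofReal_re]; positivity), div_eq_one_iff_eq hmass_ne, ← hmass,
    Real.sqrt_eq_rpow, Complex.ofReal_cpow (by positivity)]
  push_cast
  rfl

theorem norm_gaussianKernel_imag (ht : 0 < t) (v : ℝ) :
    ‖gaussianKernel t (v * Complex.I)‖ =
      Real.exp (-(1 / (4 * t ^ 2)) * v ^ 2) / (2 * t * √Real.pi) := by
  rw [norm_gaussianKernel ht, Complex.re_ofReal_mul, Complex.im_ofReal_mul, Complex.I_re,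
    Complex.I_im]
  ring_nf

theorem integrable_abs_mul_norm_gaussianKernel (ht : 0 < t) :
    Integrable fun v : ℝ => |v| * ‖gaussianKernel t (v * Complex.I)‖ := by
  simp only [norm_gaussianKernel_imag ht, mul_div_assoc']
  exact (integrable_abs_mul_exp_neg_mul_sq (by positivity)).div_const _

theorem integral_abs_mul_norm_gaussianKernel (ht : 0 < t) :
    ∫ v : ℝ, |v| * ‖gaussianKernel t (v * Complex.I)‖ = 2 * t / √Real.pi := by
  simp only [norm_gaussianKernel_imag ht, mul_div_assoc']
  rw [integral_div, integral_abs_mul_exp_neg_mul_sq (by positivity)]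
  field_simp
  norm_num

theorem norm_gaussianKernel_le_of_sq_add_one_le (ht : 0 < t) (ht' : t ≤ 1 / 2) {w : ℂ} {d : ℝ}
    (hre : w.re ∈ Icc 0 d) (him : d ^ 2 + 1 ≤ w.im ^ 2) :
    ‖gaussianKernel t w‖ ≤ 2 * t * Real.exp (d ^ 2 + 1 - w.im ^ 2) := by
  have hre_sq : w.re ^ 2 ≤ d ^ 2 := pow_le_pow_left₀ hre.1 hre.2 2
  set b : ℝ := 1 / (4 * t ^ 2) with hb
  have hb₁ : 1 ≤ b := by
    rw [hb, one_le_div (by positivity)]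
    nlinarith
  have hexp : Real.exp (-b) ≤ b⁻¹ := by
    rw [Real.exp_neg]
    gcongr
    linarith [Real.add_one_le_exp b]
  rw [norm_gaussianKernel ht]
  calc Real.exp ((w.re ^ 2 - w.im ^ 2) / (4 * t ^ 2)) / (2 * t * √Real.pi)
      = Real.exp (-b) * Real.exp (b * (w.re ^ 2 + 1 - w.im ^ 2)) / (2 * t * √Real.pi) := by
        rw [← Real.exp_add, hb]
        ring_nf
    _ ≤ b⁻¹ * Real.exp (d ^ 2 + 1 - w.im ^ 2) / (2 * t * 1) := by
        gcongr
        · nlinarith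
        · exact one_le_sqrt_pi
    _ = 2 * t * Real.exp (d ^ 2 + 1 - w.im ^ 2) := by
        rw [hb]
        field_simp
        norm_num

theorem integrable_laplace_integrand_mul_gaussianKernel {f : ℝ → ℂ} {s : ℂ} {d : ℝ}
    (hf : LaplaceConvergent f (s + d)) (ht : 0 < t) :
    Integrable (Function.uncurry fun (x v : ℝ) =>
      f x * Complex.exp (-((s + (d + v * Complex.I)) * x)) * gaussianKernel t (d + v * Complex.I))
      ((volume.restrict (Ioi 0)).prod volume) := by
  have hprod := Integrable.mul_prod hf (integrable_gaussianKernel_vertical ht d)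
  refine (hprod.bdd_mul (f := fun p : ℝ × ℝ => Complex.exp ((-(p.2 * p.1) : ℝ) * Complex.I))
    (c := 1) (Continuous.aestronglyMeasurable (by fun_prop))
    (.of_forall fun p => (Complex.norm_exp_ofReal_mul_I _).le)).congr (.of_forall fun p => ?_)
  obtain ⟨x, v⟩ := p
  have hphase : Complex.exp (-((s + (d + v * Complex.I)) * x)) =
      Complex.exp ((-(v * x) : ℝ) * Complex.I) * Complex.exp (-((s + d) * x)) := by
    rw [← Complex.exp_add]
    push_cast
    ring_nf
  simp only [Function.uncurry, hphase]
  ring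

theorem integral_exp_mul_gaussianKernel_vertical (ht : 0 < t) (s : ℂ) (d x : ℝ) :
    ∫ v : ℝ, Complex.exp (-((s + (d + v * Complex.I)) * x)) *
      gaussianKernel t (d + v * Complex.I) =
      Real.exp (-(t * x) ^ 2) * Complex.exp (-(s * x)) := by
  have hsquare : ∀ v : ℝ, Complex.exp (-((s + (d + v * Complex.I)) * x)) *
      gaussianKernel t (d + v * Complex.I) = Real.exp (-(t * x) ^ 2) * Complex.exp (-(s * x)) *
        gaussianKernel t ((d - 2 * t ^ 2 * x : ℝ) + v * Complex.I) := fun v => by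
    rw [add_mul, neg_add, Complex.exp_add, mul_assoc, mul_comm (Complex.exp (-((_ + _) * _))),
      gaussianKernel_mul_exp ht.ne']
    push_cast
    ring_nf
  simp only [hsquare]
  rw [integral_const_mul, integral_gaussianKernel_vertical ht, mul_one]

theorem integral_laplace_mul_gaussianKernel {f : ℝ → ℂ} {s : ℂ} {d : ℝ}
    (hf : LaplaceConvergent f (s + d)) (ht : 0 < t) :
    ∫ v : ℝ, Laplace f (s + (d + v * Complex.I)) * gaussianKernel t (d + v * Complex.I) =
      Laplace (gaussianDamp t f) s := by
  simp only [Laplace, ← integral_mul_const]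
  rw [← integral_integral_swap (integrable_laplace_integrand_mul_gaussianKernel hf ht)]
  refine integral_congr_ae (.of_forall fun x => ?_)
  simp only [mul_assoc (f x)]
  rw [integral_const_mul, integral_exp_mul_gaussianKernel_vertical ht, gaussianDamp,
    Complex.real_smul, mul_left_comm, mul_assoc]

theorem laplace_gaussianDamp_sub_eq_integral {f : ℝ → ℂ} {s : ℂ} {d : ℝ}
    (hf : LaplaceConvergent f (s + d)) (ht : 0 < t) (z : ℂ) :
    Laplace (gaussianDamp t f) s - z =
      ∫ v : ℝ, (Laplace f (s + (d + v * Complex.I)) - z) *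
        gaussianKernel t (d + v * Complex.I) := by
  have hint : Integrable fun v : ℝ =>
      Laplace f (s + (d + v * Complex.I)) * gaussianKernel t (d + v * Complex.I) := by
    simpa only [Laplace, Function.uncurry, integral_mul_const] using
      (integrable_laplace_integrand_mul_gaussianKernel hf ht).integral_prod_right
  simp only [sub_mul]
  rw [integral_sub hint ((integrable_gaussianKernel_vertical ht d).const_mul z),
    integral_laplace_mul_gaussianKernel hf ht, integral_const_mul,
    integral_gaussianKernel_vertical ht, mul_one]

section ContourShift

variable {h : ℂ → ℂ} {d R M L : ℝ}

theorem norm_integral_mul_gaussianKernel_imag_le (ht : 0 < t) (hR : 0 ≤ R) (hL₀ : 0 ≤ L)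
    (hL : ∀ v ∈ Icc (-R) R, ‖h (v * Complex.I)‖ ≤ L * |v|) :
    ‖∫ v in -R..R, h (v * Complex.I) * gaussianKernel t (v * Complex.I)‖ ≤ 2 * t * L := by
  have hint : Integrable fun v : ℝ => L * (|v| * ‖gaussianKernel t (v * Complex.I)‖) :=
    (integrable_abs_mul_norm_gaussianKernel ht).const_mul L
  have hRR : -R ≤ R := neg_le_self hR
  calc ‖∫ v in -R..R, h (v * Complex.I) * gaussianKernel t (v * Complex.I)‖
      ≤ ∫ v in -R..R, L * (|v| * ‖gaussianKernel t (v * Complex.I)‖) := by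
        refine intervalIntegral.norm_integral_le_of_norm_le hRR (.of_forall fun v hv => ?_)
          hint.intervalIntegrable
        rw [norm_mul, ← mul_assoc]
        gcongr
        exact hL v (Ioc_subset_Icc_self hv)
    _ ≤ ∫ v : ℝ, L * (|v| * ‖gaussianKernel t (v * Complex.I)‖) := by
        rw [intervalIntegral.integral_of_le hRR]
        exact setIntegral_le_integral hint (.of_forall fun v => by positivity)
    _ = 2 * t * L / √Real.pi := by
        rw [integral_const_mul, integral_abs_mul_norm_gaussianKernel ht]
        ring
    _ ≤ 2 * t * L := div_le_self (by positivity) one_le_sqrt_pi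

theorem norm_verticalIntegral_mul_gaussianKernel_le_add (ht : 0 < t) (ht' : t ≤ 1 / 2) (hd : 0 ≤ d)
    (hR : 0 ≤ R) (hdR : d ^ 2 + 1 ≤ R ^ 2) (hh : DifferentiableOn ℂ h (Icc 0 d ×ℂ Icc (-R) R))
    (hM : ∀ w ∈ Icc 0 d ×ℂ Icc (-R) R, ‖h w‖ ≤ M) :
    ‖∫ v in -R..R, h (d + v * Complex.I) * gaussianKernel t (d + v * Complex.I)‖ ≤
      ‖∫ v in -R..R, h (v * Complex.I) * gaussianKernel t (v * Complex.I)‖ +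
        2 * t * (2 * d * M) := by
  have hRR : -R ≤ R := neg_le_self hR
  have hhorizontal : ∀ y ∈ Icc (-R) R, y ^ 2 = R ^ 2 → ∀ x ∈ Icc 0 d,
      ‖h (x + y * Complex.I) * gaussianKernel t (x + y * Complex.I)‖ ≤ M * (2 * t) := by
    intro y hy hyR x hx
    have hkernel : ‖gaussianKernel t (x + y * Complex.I)‖ ≤ 2 * t := by
      refine (norm_gaussianKernel_le_of_sq_add_one_le ht ht' (d := d) (by simpa using hx)
        (by simpa [hyR] using hdR)).trans (mul_le_of_le_one_right (by positivity) ?_)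
      simpa [hyR] using hdR
    have hh_le : ‖h (x + y * Complex.I)‖ ≤ M :=
      hM _ (by simpa [Complex.mem_reProdIm] using ⟨hx, hy⟩)
    exact norm_mul_le_of_le hh_le hkernel
  have hshift := norm_verticalIntegral_le_add hd hRR
    (hh.mul (differentiable_gaussianKernel t).differentiableOn)
    (hhorizontal (-R) (left_mem_Icc.2 hRR) (neg_sq R)) (hhorizontal R (right_mem_Icc.2 hRR) rfl)
  simp only [Pi.mul_apply, Complex.ofReal_zero, zero_add] at hshift
  linarith

theorem norm_integral_mul_gaussianKernel_le_add (ht : 0 < t) (ht' : t ≤ 1 / 2) (hd : 0 ≤ d)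
    (hR : 0 ≤ R) (hdR : d ^ 2 + 1 ≤ R ^ 2) (hh : Continuous fun v : ℝ => h (d + v * Complex.I))
    (hM : ∀ v : ℝ, ‖h (d + v * Complex.I)‖ ≤ M) :
    ‖∫ v : ℝ, h (d + v * Complex.I) * gaussianKernel t (d + v * Complex.I)‖ ≤
      ‖∫ v in -R..R, h (d + v * Complex.I) * gaussianKernel t (d + v * Complex.I)‖ +
        2 * t * (Real.exp (d ^ 2 + 1) * √Real.pi * M) := by
  have hM₀ : 0 ≤ M := (norm_nonneg _).trans (hM 0)
  have hint : Integrable fun v : ℝ =>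
      h (d + v * Complex.I) * gaussianKernel t (d + v * Complex.I) :=
    (integrable_gaussianKernel_vertical ht d).bdd_mul hh.aestronglyMeasurable (.of_forall hM)
  have htail : ∀ v ∉ Ioc (-R) R,
      ‖h (d + v * Complex.I) * gaussianKernel t (d + v * Complex.I)‖ ≤
        M * (2 * t * Real.exp (d ^ 2 + 1 - v ^ 2)) := fun v hv => by
    have hRv : R ^ 2 ≤ v ^ 2 := not_lt.1 fun hlt =>
      hv (Ioo_subset_Ioc_self (abs_lt_of_sq_lt_sq' hlt hR))
    refine norm_mul_le_of_le (hM v) ?_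
    simpa using norm_gaussianKernel_le_of_sq_add_one_le ht ht' (w := d + v * Complex.I) (d := d)
      (by simpa using hd) (by simpa using hdR.trans hRv)
  refine (norm_integral_le_norm_intervalIntegral_add (neg_le_self hR) hint
    (((integrable_exp_sub_sq _).const_mul _).const_mul M) (fun v => by positivity)
    htail).trans_eq ?_
  rw [integral_const_mul, integral_const_mul, integral_exp_sub_sq]
  ring

theorem norm_integral_mul_gaussianKernel_le (ht : 0 < t) (ht' : t ≤ 1 / 2) (hd : 0 ≤ d)
    (hR : 0 ≤ R) (hdR : d ^ 2 + 1 ≤ R ^ 2) (hh : DifferentiableOn ℂ h (Icc 0 d ×ℂ Icc (-R) R))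
    (hM : ∀ w ∈ Icc 0 d ×ℂ Icc (-R) R, ‖h w‖ ≤ M)
    (hline : Continuous fun v : ℝ => h (d + v * Complex.I))
    (hlineM : ∀ v : ℝ, ‖h (d + v * Complex.I)‖ ≤ M) (hL₀ : 0 ≤ L)
    (hL : ∀ v ∈ Icc (-R) R, ‖h (v * Complex.I)‖ ≤ L * |v|) :
    ‖∫ v : ℝ, h (d + v * Complex.I) * gaussianKernel t (d + v * Complex.I)‖ ≤
      2 * t * (L + 2 * d * M + Real.exp (d ^ 2 + 1) * √Real.pi * M) := by
  linarith [norm_integral_mul_gaussianKernel_le_add ht ht' hd hR hdR hline hlineM,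
    norm_verticalIntegral_mul_gaussianKernel_le_add ht ht' hd hR hdR hh hM,
    norm_integral_mul_gaussianKernel_imag_le ht hR hL₀ hL]

end ContourShift

end GaussianKernel

theorem exists_lipschitzOnWith_of_differentiableOn_of_isCompact {E : Type*} [NormedAddCommGroup E]
    [NormedSpace ℂ E] [CompleteSpace E] {F : ℂ → E} {U K : Set ℂ} (hF : DifferentiableOn ℂ F U)
    (hU : IsOpen U) (hK : IsCompact K) (hKU : K ⊆ U) : ∃ L, LipschitzOnWith L F K := by
  refine LocallyLipschitzOn.exists_lipschitzOnWith_of_compact hK fun x hx => ?_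
  obtain ⟨L, V, hV, hL⟩ := ContDiffAt.exists_lipschitzOnWith
    ((hF.contDiffOn hU).contDiffAt (hU.mem_nhds (hKU hx)))
  exact ⟨L, V, mem_nhdsWithin_of_mem_nhds hV, hL⟩

section LaplaceApproximation

variable {f : ℝ → ℂ} {F : ℂ → ℂ} {s₀ : ℂ} {a c : ℝ}

theorem norm_laplace_gaussianDamp_sub_le {s : ℂ} {t R B : ℝ} {L : NNReal} (ht : 0 < t)
    (ht' : t ≤ 1 / 2) (hR : 0 ≤ R) (hcR : (c - s.re) ^ 2 + 1 ≤ R ^ 2)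
    (hs : s.re ≤ c)
    (hF : DifferentiableOn ℂ F (Icc s.re c ×ℂ Icc (s.im - R) (s.im + R)))
    (hB : ∀ z ∈ Icc s.re c ×ℂ Icc (s.im - R) (s.im + R), ‖F z‖ ≤ B)
    (hL : LipschitzOnWith L F (Icc s.re c ×ℂ Icc (s.im - R) (s.im + R)))
    (hFf : ∀ z, z.re = c → F z = Laplace f z) (hlineB : ∀ z : ℂ, z.re = c → ‖Laplace f z‖ ≤ B)
    (hf : LaplaceConvergent f s₀) (hc : s₀.re < c) :
    ‖Laplace (gaussianDamp t f) s - F s‖ ≤ 2 * t *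
      (L + 2 * (c - s.re) * (2 * B) + Real.exp ((c - s.re) ^ 2 + 1) * √Real.pi * (2 * B)) := by
  set d : ℝ := c - s.re with hd_def
  have hd : 0 ≤ d := sub_nonneg.2 hs
  have hrect : MapsTo (s + ·) (Icc 0 d ×ℂ Icc (-R) R)
      (Icc s.re c ×ℂ Icc (s.im - R) (s.im + R)) := fun w hw => by
    obtain ⟨⟨hre₀, hre⟩, him₀, him⟩ := Complex.mem_reProdIm.1 hw
    simp only [Complex.mem_reProdIm, Complex.add_re, Complex.add_im, mem_Icc]
    refine ⟨⟨?_, ?_⟩, ?_, ?_⟩ <;> linarith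
  have hs_mem : s ∈ Icc s.re c ×ℂ Icc (s.im - R) (s.im + R) := by
    simpa using hrect (x := 0) (by simp [Complex.mem_reProdIm, hd, hR])
  have hline_re : ∀ v : ℝ, (s + (d + v * Complex.I)).re = c := fun v => by simp [hd_def]
  have hline_cont : Continuous fun v : ℝ => Laplace f (s + (d + v * Complex.I)) - F s := by
    refine (continuous_iff_continuousAt.2 fun v => ?_).sub continuous_const
    exact ContinuousAt.comp (f := fun v : ℝ => s + (d + v * Complex.I))
      (hf.differentiableAt (by rwa [hline_re])).continuousAt (by fun_prop)
  have hFline : ∀ v : ℝ, F (s + (d + v * Complex.I)) = Laplace f (s + (d + v * Complex.I)) :=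
    fun v => hFf _ (hline_re v)
  have h_lipschitz : ∀ v ∈ Icc (-R) R, ‖F (s + v * Complex.I) - F s‖ ≤ L * |v| := fun v hv => by
    simpa using hL.norm_sub_le
      (hrect (x := v * Complex.I) (by simpa [Complex.mem_reProdIm, hd] using hv)) hs_mem
  have hconv : LaplaceConvergent f (s + d) := hf.mono (by simpa [hd_def] using hc.le)
  have hbound : ∀ {z w : ℂ}, ‖z‖ ≤ B → ‖w‖ ≤ B → ‖z - w‖ ≤ 2 * B := fun hz hw =>
    (norm_sub_le_of_le hz hw).trans_eq (two_mul B).symm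
  rw [laplace_gaussianDamp_sub_eq_integral hconv ht]
  simp only [← hFline] at hline_cont ⊢
  exact norm_integral_mul_gaussianKernel_le (h := fun w => F (s + w) - F s) ht ht' hd hR hcR
    ((hF.comp (by fun_prop) hrect).sub_const _)
    (fun w hw => hbound (hB _ (hrect hw)) (hB s hs_mem)) hline_cont
    (fun v => hbound (by simpa only [hFline] using hlineB _ (hline_re v)) (hB s hs_mem)) L.2
    h_lipschitz

theorem exists_forall_norm_laplace_gaussianDamp_sub_le {α : ℝ}
    (hF : DifferentiableOn ℂ F {s | α < s.re}) (hFf : ∀ s, s₀.re < s.re → F s = Laplace f s)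
    (hf : LaplaceConvergent f s₀) (hαa : α < a) (hc : s₀.re < c) (r : ℝ) :
    ∃ C, ∀ t ∈ Ioc (0 : ℝ) (1 / 2), ∀ s ∈ Icc a c ×ℂ Icc (-r) r,
      ‖Laplace (gaussianDamp t f) s - F s‖ ≤ t * C := by
  set R : ℝ := |c - a| + 1
  set K : Set ℂ := Icc a c ×ℂ Icc (-r - R) (r + R)
  have hKα : K ⊆ {s | α < s.re} := fun z hz => hαa.trans_le hz.1.1
  have hK : IsCompact K := isCompact_Icc.reProdIm isCompact_Icc
  obtain ⟨L, hL⟩ := exists_lipschitzOnWith_of_differentiableOn_of_isCompact hF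
    (isOpen_lt continuous_const Complex.continuous_re) hK hKα
  obtain ⟨B₁, hB₁⟩ := hK.exists_bound_of_continuousOn (hF.continuousOn.mono hKα)
  set B : ℝ := max B₁ (∫ x in Ioi (0 : ℝ), ‖f x‖ * Real.exp (-(c * x)))
  have : 0 ≤ B := le_max_of_le_right (by positivity)
  refine ⟨2 * (L + 2 * (c - a) * (2 * B) + Real.exp ((c - a) ^ 2 + 1) * √Real.pi * (2 * B)),
    fun t ⟨ht₀, ht₁⟩ s hs => ?_⟩
  obtain ⟨⟨has, hsc⟩, hrs, hsr⟩ := Complex.mem_reProdIm.1 hs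
  have hsK : Icc s.re c ×ℂ Icc (s.im - R) (s.im + R) ⊆ K :=
    Complex.reProdIm_subset_iff.2 (prod_mono (Icc_subset_Icc_left has)
      (Icc_subset_Icc (by gcongr) (by gcongr)))
  have hd : (c - s.re) ^ 2 ≤ (c - a) ^ 2 :=
    pow_le_pow_left₀ (sub_nonneg.2 hsc) (sub_le_sub_left has c) 2
  have hdR : (c - s.re) ^ 2 + 1 ≤ R ^ 2 := by
    nlinarith [abs_nonneg (c - a), sq_abs (c - a)]
  calc ‖Laplace (gaussianDamp t f) s - F s‖
      ≤ 2 * t * (L + 2 * (c - s.re) * (2 * B) +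
          Real.exp ((c - s.re) ^ 2 + 1) * √Real.pi * (2 * B)) :=
        norm_laplace_gaussianDamp_sub_le ht₀ ht₁ (by positivity) hdR hsc
          (hF.mono (hsK.trans hKα)) (fun z hz => (hB₁ z (hsK hz)).trans (le_max_left _ _))
          (hL.mono hsK) (fun z hz => hFf z (hz ▸ hc))
          (fun z hz => (norm_laplace_le f z).trans (by rw [hz]; exact le_max_right _ _)) hf hc
    _ ≤ 2 * t * (L + 2 * (c - a) * (2 * B) +
          Real.exp ((c - a) ^ 2 + 1) * √Real.pi * (2 * B)) := by gcongr
    _ = t * (2 * (L + 2 * (c - a) * (2 * B) +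
          Real.exp ((c - a) ^ 2 + 1) * √Real.pi * (2 * B))) := by ring

theorem tendstoUniformlyOn_laplace_gaussianDamp {α : ℝ}
    (hF : DifferentiableOn ℂ F {s | α < s.re}) (hFf : ∀ s, s₀.re < s.re → F s = Laplace f s)
    (hf : LaplaceConvergent f s₀) (hαa : α < a) (hc : s₀.re < c) (r : ℝ) :
    TendstoUniformlyOn (fun t => Laplace (gaussianDamp t f)) F (𝓝[>] 0)
      (Icc a c ×ℂ Icc (-r) r) := by
  obtain ⟨C, hC⟩ := exists_forall_norm_laplace_gaussianDamp_sub_le hF hFf hf hαa hc r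
  have hlim : Tendsto (fun t => t * C) (𝓝[>] 0) (𝓝 0) :=
    ((continuous_mul_const C).tendsto' 0 0 (zero_mul C)).mono_left nhdsWithin_le_nhds
  rw [Metric.tendstoUniformlyOn_iff]
  intro ε hε
  filter_upwards [hlim.eventually_lt_const hε, Ioc_mem_nhdsGT one_half_pos] with t htC ht s hs
  rw [dist_comm, dist_eq_norm]
  exact (hC t ht s hs).trans_lt htC

end LaplaceApproximation

/-- `V_{-∞}` is dense in the Fréchet space `V_α`: for every `τ ∈ V_α` (with
analytic extension `F` of its Laplace transform to the half-plane `Re s > α`),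
every seminorm `‖·‖_{α',r}` with `α < α' < 0`, `r > 0`, and every `ε > 0`, there
is `σ ∈ V_{-∞}` (with entire extension `G`) within distance `ε` of `τ`. -/
theorem Vminusinfty_dense_in_Valpha
    (α : ℝ) (hα : α < 0)
    (τ τ' : ℝ → ℂ) (F : ℂ → ℂ)
    (hder : ∀ x ∈ Set.Ici (0 : ℝ), HasDerivWithinAt τ (τ' x) (Set.Ici 0) x)
    (hcont : ContinuousOn τ' (Set.Ici 0))
    (hto0 : Tendsto τ' atTop (nhds 0))
    (hFan : DifferentiableOn ℂ F {s : ℂ | α < s.re})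
    (hFeq : ∀ s : ℂ, 0 < s.re → F s = Laplace τ s)
    (α' r : ℝ) (hα'1 : α < α') (hα'2 : α' < 0) (hr : 0 < r)
    (ε : ℝ) (hε : 0 < ε) :
    ∃ (σ σ' : ℝ → ℂ) (G : ℂ → ℂ),
      (∀ x ∈ Set.Ici (0 : ℝ), HasDerivWithinAt σ (σ' x) (Set.Ici 0) x) ∧
      ContinuousOn σ' (Set.Ici 0) ∧
      Tendsto σ' atTop (nhds 0) ∧
      Differentiable ℂ G ∧
      (∀ s : ℂ, 0 < s.re → G s = Laplace σ s) ∧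
      ∃ ε₁ ε₂ : ℝ, 0 ≤ ε₁ ∧ 0 ≤ ε₂ ∧ ε₁ + ε₂ < ε ∧
        (∀ x : ℝ, 0 ≤ x → ‖τ' x - σ' x‖ ≤ ε₁) ∧
        (∀ s ∈ Rbar α' r, ‖F s - G s‖ ≤ ε₂) := by
  have hτ_cont : ContinuousOn τ (Ici 0) := fun x hx => (hder x hx).continuousWithinAt
  have hτ_growth : τ =o[atTop] (id : ℝ → ℝ) := isLittleO_id_of_tendsto_deriv_zero hder hto0
  have hτ_conv : LaplaceConvergent τ (1 / 2) :=
    laplaceConvergent_of_isBigO_id hτ_cont hτ_growth.isBigO (by norm_num)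
  have hderiv_lim := tendstoUniformlyOn_gaussianDampDeriv hτ_cont hτ_growth hcont hto0
  have hlaplace_lim : TendstoUniformlyOn (fun t => Laplace (gaussianDamp t τ)) F (𝓝[>] 0)
      (Icc α' 1 ×ℂ Icc (-r) r) :=
    tendstoUniformlyOn_laplace_gaussianDamp hFan
      (fun s hs => hFeq s (lt_trans (by norm_num) hs)) hτ_conv hα'1 (by norm_num) r
  rw [Metric.tendstoUniformlyOn_iff] at hderiv_lim hlaplace_lim
  have hε₃ : 0 < ε / 3 := by positivity
  obtain ⟨t, hderiv_lt, hlaplace_lt, ht⟩ :=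
    (((hderiv_lim _ hε₃).filter_mono nhdsWithin_le_nhds).and
      ((hlaplace_lim _ hε₃).and self_mem_nhdsWithin)).exists
  refine ⟨gaussianDamp t τ, gaussianDampDeriv t τ τ', Laplace (gaussianDamp t τ),
    fun x hx => hasDerivWithinAt_gaussianDamp (hder x hx) t,
    continuousOn_gaussianDampDeriv hτ_cont hcont t,
    tendsto_gaussianDampDeriv_atTop hτ_growth hto0 t,
    differentiable_laplace_gaussianDamp hτ_conv (ne_of_gt ht), fun _ _ => rfl,
    ε / 3, ε / 3, hε₃.le, hε₃.le, by linarith, fun x hx => ?_, fun s hs => ?_⟩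
  · simpa only [dist_eq_norm] using (hderiv_lt x hx).le
  · simpa only [dist_eq_norm] using (hlaplace_lt s ⟨⟨hs.1, hs.2.1⟩, abs_le.1 hs.2.2⟩).le
end

section
/- Let α < 0 and r > 0, and let τ ∈ V_{α,r}, i.e., τ ∈ C¹[0,∞) with τ'(x) → 0 as x → ∞ and with an analytic extension of its Laplace transform to the open rectangle R_{α,r} that is continuous on the closed rectangle R̄_{α,r}. Then lim_{x→∞} τ(x) = 0. -/
open Filter Set MeasureTheory

/-- The open rectangle `R_{α,r} = {s : α < Re s < 1, |Im s| < r}`. -/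
def Ropen (α r : ℝ) : Set ℂ := {s : ℂ | α < s.re ∧ s.re < 1 ∧ |s.im| < r}

/-!
Newman's contour method. Put `Φ_T(z) = z ∫_0^T e^{-zt} τ(t) dt + e^{-zT} τ(T)`, so that
`Φ_T(0) = τ(T)`; integration by parts shows that `Φ_T(z)` is, up to a constant, the truncated
Laplace transform of `τ'`. As `T → ∞` it tends to `z L{τ;z}` for `Re z > 0`, so `z F(z) - Φ_T(z)` is
there a Laplace tail of `τ'`, of norm at most `ε e^{-T Re z} / |Re z|` once `‖τ'‖ ≤ ε` beyond `T`.
For `Re z < 0` the same bound holds up to an additive constant `B` independent of `T`. The kernel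
`e^{zT} (1 + z²/R²)` has norm `2 e^{T Re z} |Re z| / R` on the circle `‖z‖ = R`, which cancels these
singularities, and the maximum modulus principle at `z = 0` yields `‖τ(T)‖ ≤ (2/R) (ε + B/T)`.
-/

open Complex Topology Asymptotics Metric

section NewmanKernel

/-- Newman's contour kernel for the circle of radius `R`, normalised to be `1` at the origin. The
factor `1 + z² / R²` vanishes where the circle meets the imaginary axis. -/
noncomputable def newmanKernel (R T : ℝ) (z : ℂ) : ℂ :=
  cexp (z * T) * (1 + z ^ 2 / (R : ℂ) ^ 2)

lemma newmanKernel_zero (R T : ℝ) : newmanKernel R T 0 = 1 := by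
  simp [newmanKernel]

lemma differentiable_newmanKernel (R T : ℝ) : Differentiable ℂ (newmanKernel R T) := by
  unfold newmanKernel
  fun_prop

lemma norm_one_add_sq_div_norm_sq {z : ℂ} (hz : z ≠ 0) :
    ‖1 + z ^ 2 / (‖z‖ : ℂ) ^ 2‖ = 2 * |z.re| / ‖z‖ := by
  have hnorm : (‖z‖ : ℂ) ≠ 0 := ofReal_ne_zero.2 (norm_ne_zero_iff.2 hz)
  have hfactor : 1 + z ^ 2 / (‖z‖ : ℂ) ^ 2 = z * ((2 * z.re : ℝ) : ℂ) / (‖z‖ : ℂ) ^ 2 := by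
    field_simp
    rw [← add_conj z, ← mul_conj']
    ring
  rw [hfactor, norm_div, norm_mul, norm_pow, norm_real, norm_real, norm_norm, Real.norm_eq_abs,
    abs_mul, abs_two]
  field_simp

lemma norm_newmanKernel {R : ℝ} (T : ℝ) {z : ℂ} (hR : 0 < R) (hz : z ∈ sphere 0 R) :
    ‖newmanKernel R T z‖ = Real.exp (z.re * T) * (2 * |z.re| / R) := by
  obtain rfl : ‖z‖ = R := mem_sphere_zero_iff_norm.1 hz
  rw [newmanKernel, norm_mul, norm_exp, norm_one_add_sq_div_norm_sq (norm_pos_iff.1 hR),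
    re_mul_ofReal]

lemma norm_newmanKernel_mul_exp_div {R : ℝ} (T : ℝ) {z : ℂ} (hR : 0 < R) (hz : z ∈ sphere 0 R)
    (hre : z.re ≠ 0) :
    ‖newmanKernel R T z‖ * (Real.exp (-(z.re * T)) / |z.re|) = 2 / R := by
  have habs : |z.re| ≠ 0 := abs_ne_zero.2 hre
  rw [norm_newmanKernel T hR hz, Real.exp_neg]
  field_simp

lemma norm_newmanKernel_le_of_re_neg {R T : ℝ} {z : ℂ} (hR : 0 < R) (hT : 0 < T)
    (hz : z ∈ sphere 0 R) (hre : z.re < 0) : ‖newmanKernel R T z‖ ≤ 2 / R / T := by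
  have hexp : -(z.re * T) ≤ Real.exp (-(z.re * T)) :=
    (le_add_of_nonneg_right zero_le_one).trans (Real.add_one_le_exp _)
  rw [norm_newmanKernel T hR hz, abs_of_neg hre, le_div_iff₀ hT]
  calc Real.exp (z.re * T) * (2 * -z.re / R) * T
      = 2 / R * (-(z.re * T) * Real.exp (z.re * T)) := by ring
    _ ≤ 2 / R * (Real.exp (-(z.re * T)) * Real.exp (z.re * T)) := by gcongr
    _ = 2 / R := by rw [← Real.exp_add, neg_add_cancel, Real.exp_zero, mul_one]

lemma norm_apply_zero_le_of_sphere_bounds {E : Type*} [NormedAddCommGroup E] [NormedSpace ℂ E]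
    {g : ℂ → E} {R T ε B : ℝ} (hR : 0 < R) (hT : 0 < T) (hε : 0 ≤ ε) (hB : 0 ≤ B)
    (hg : DiffContOnCl ℂ g (ball 0 R))
    (hright : ∀ z ∈ sphere (0 : ℂ) R, 0 < z.re → ‖g z‖ ≤ ε * (Real.exp (-(z.re * T)) / |z.re|))
    (hleft : ∀ z ∈ sphere (0 : ℂ) R, z.re < 0 →
      ‖g z‖ ≤ B + ε * (Real.exp (-(z.re * T)) / |z.re|)) :
    ‖g 0‖ ≤ 2 / R * (ε + B / T) := by
  suffices ‖newmanKernel R T 0 • g 0‖ ≤ 2 / R * (ε + B / T) by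
    rwa [newmanKernel_zero, one_smul] at this
  refine norm_le_of_forall_mem_frontier_norm_le
    (f := fun z ↦ newmanKernel R T z • g z) isBounded_ball
    ((differentiable_newmanKernel R T).diffContOnCl.smul hg) (fun z hz ↦ ?_)
    (subset_closure (mem_ball_self hR))
  rw [frontier_ball _ hR.ne'] at hz
  simp only [norm_smul]
  rcases lt_trichotomy z.re 0 with hneg | hzero | hpos
  · calc ‖newmanKernel R T z‖ * ‖g z‖
        ≤ ‖newmanKernel R T z‖ * (B + ε * (Real.exp (-(z.re * T)) / |z.re|)) := by
          gcongr
          exact hleft z hz hneg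
      _ = ε * (‖newmanKernel R T z‖ * (Real.exp (-(z.re * T)) / |z.re|))
            + ‖newmanKernel R T z‖ * B := by ring
      _ ≤ ε * (2 / R) + 2 / R / T * B := by
          rw [norm_newmanKernel_mul_exp_div T hR hz hneg.ne]
          gcongr
          exact norm_newmanKernel_le_of_re_neg hR hT hz hneg
      _ = 2 / R * (ε + B / T) := by ring
  · rw [norm_newmanKernel T hR hz, hzero, abs_zero, mul_zero, zero_div, mul_zero, zero_mul]
    positivity
  · calc ‖newmanKernel R T z‖ * ‖g z‖
        ≤ ‖newmanKernel R T z‖ * (ε * (Real.exp (-(z.re * T)) / |z.re|)) := by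
          gcongr
          exact hright z hz hpos
      _ = 2 / R * ε := by
          rw [mul_left_comm, norm_newmanKernel_mul_exp_div T hR hz hpos.ne', mul_comm]
      _ ≤ 2 / R * (ε + B / T) := by
          gcongr
          exact le_add_of_nonneg_right (by positivity)

end NewmanKernel

section LaplaceTransform

lemma intervalIntegrable_of_locallyIntegrableOn_Ici {E : Type*} [NormedAddCommGroup E]
    {f : ℝ → E} {a b : ℝ} (hf : LocallyIntegrableOn f (Ici a)) (hab : a ≤ b) :
    IntervalIntegrable f volume a b :=
  (intervalIntegrable_iff_integrableOn_Icc_of_le hab).2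
    (hf.integrableOn_compact_subset Icc_subset_Ici_self isCompact_Icc)

variable {E : Type*} [NormedAddCommGroup E] [NormedSpace ℂ E]

/-- The Laplace transform of a function with values in a complex normed space, with the exponential
acting by scalar multiplication; see `vectorLaplace_eq_Laplace` for the scalar case. -/
noncomputable def vectorLaplace (f : ℝ → E) (z : ℂ) : E :=
  ∫ t in Ioi (0 : ℝ), cexp (-(z * t)) • f t

/-- The truncation at `T` of `z ↦ z L{f;z}`, with the boundary term `e^{-zT} f(T)` added. For `f` of
class `C¹` this is `f(0) + ∫_0^T e^{-zt} f'(t) dt`; integration by parts removes `f'`, so that `f`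
need only be differentiable far out. -/
noncomputable def truncatedDerivLaplace (f : ℝ → E) (z : ℂ) (T : ℝ) : E :=
  z • (∫ t in (0 : ℝ)..T, cexp (-(z * t)) • f t) + cexp (-(z * T)) • f T

lemma vectorLaplace_eq_Laplace (f : ℝ → ℂ) : vectorLaplace f = Laplace f := by
  funext z
  simp only [vectorLaplace, Laplace, smul_eq_mul, mul_comm]

lemma truncatedDerivLaplace_zero (f : ℝ → E) (T : ℝ) : truncatedDerivLaplace f 0 T = f T := by
  simp [truncatedDerivLaplace]

lemma norm_cexp_neg_mul_ofReal (z : ℂ) (t : ℝ) : ‖cexp (-(z * t))‖ = Real.exp (-(z.re * t)) := by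
  rw [norm_exp, neg_re, re_mul_ofReal]

lemma intervalIntegrable_cexp_smul {f : ℝ → E} {a b : ℝ} (hf : IntervalIntegrable f volume a b)
    (z : ℂ) : IntervalIntegrable (fun t : ℝ ↦ cexp (-(z * t)) • f t) volume a b :=
  hf.continuousOn_smul (by fun_prop)

lemma locallyIntegrableOn_cexp_smul {f : ℝ → E} {s : Set ℝ} (hs : IsLocallyClosed s)
    (hf : LocallyIntegrableOn f s) (z : ℂ) :
    LocallyIntegrableOn (fun t : ℝ ↦ cexp (-(z * t)) • f t) s :=
  hf.continuousOn_smul hs (by fun_prop)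

lemma differentiable_intervalIntegral_cexp_smul {f : ℝ → E} {a b : ℝ}
    (hf : IntervalIntegrable f volume a b) :
    Differentiable ℂ fun z : ℂ ↦ ∫ t in a..b, cexp (-(z * t)) • f t := by
  intro z₀
  have hderiv_cont : Continuous fun p : ℂ × ℝ ↦ cexp (-(p.1 * p.2)) * -(p.2 : ℂ) := by fun_prop
  obtain ⟨C, hC⟩ := ((isCompact_closedBall z₀ 1).prod
    (isCompact_uIcc (a := a) (b := b))).exists_bound_of_continuousOn hderiv_cont.continuousOn
  have hderiv (z : ℂ) (t : ℝ) :
      HasDerivAt (fun z : ℂ ↦ cexp (-(z * t)) • f t) ((cexp (-(z * t)) * -(t : ℂ)) • f t) z := by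
    simpa using! (((hasDerivAt_id z).mul_const (t : ℂ)).neg.cexp.smul_const (f t))
  refine (intervalIntegral.hasDerivAt_integral_of_dominated_loc_of_deriv_le
    (bound := fun t ↦ C * ‖f t‖) (closedBall_mem_nhds z₀ one_pos)
    (Eventually.of_forall fun z ↦ (intervalIntegrable_cexp_smul hf z).def'.aestronglyMeasurable)
    (intervalIntegrable_cexp_smul hf z₀)
    (hf.continuousOn_smul (f := fun t : ℝ ↦ cexp (-(z₀ * t)) * -(t : ℂ))
      (by fun_prop)).def'.aestronglyMeasurable
    (Eventually.of_forall fun t ht z hz ↦ ?_) (hf.norm.const_mul C)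
    (Eventually.of_forall fun t _ z _ ↦ hderiv z t)).2.differentiableAt
  rw [norm_smul]
  gcongr
  exact hC (z, t) ⟨hz, uIoc_subset_uIcc ht⟩

lemma differentiable_truncatedDerivLaplace {f : ℝ → E} {T : ℝ}
    (hf : IntervalIntegrable f volume 0 T) :
    Differentiable ℂ fun z ↦ truncatedDerivLaplace f z T := by
  unfold truncatedDerivLaplace
  exact (differentiable_id.smul (differentiable_intervalIntegral_cexp_smul hf)).add (by fun_prop)

lemma tendsto_truncatedDerivLaplace {f : ℝ → E} (hf : LocallyIntegrableOn f (Ici 0))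
    (hgrowth : f =O[atTop] fun t ↦ t) {z : ℂ} (hz : 0 < z.re) :
    Tendsto (truncatedDerivLaplace f z) atTop (𝓝 (z • vectorLaplace f z)) := by
  have hexp : (fun t : ℝ ↦ cexp (-(z * t))) =O[atTop] fun t ↦ Real.exp (-(z.re * t)) :=
    .of_norm_le fun t ↦ (norm_cexp_neg_mul_ofReal z t).le
  have hsubexp : f =O[atTop] fun t ↦ Real.exp (z.re / 2 * t) :=
    hgrowth.trans (by simpa using! (isLittleO_pow_exp_pos_mul_atTop 1 (half_pos hz)).isBigO)
  have hdecay : (fun t : ℝ ↦ cexp (-(z * t)) • f t) =O[atTop]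
      fun t ↦ Real.exp (-(z.re / 2) * t) := by
    refine (hexp.smul hsubexp).congr_right fun t ↦ ?_
    rw [smul_eq_mul, ← Real.exp_add]
    ring_nf
  have hint : IntegrableOn (fun t : ℝ ↦ cexp (-(z * t)) • f t) (Ioi 0) :=
    ((locallyIntegrableOn_cexp_smul isClosed_Ici.isLocallyClosed hf z).integrableOn_of_isBigO_atTop
      hdecay ⟨Ioi 0, Ioi_mem_atTop 0, exp_neg_integrableOn_Ioi 0 (half_pos hz)⟩).mono_set
      Ioi_subset_Ici_self
  have hboundary : Tendsto (fun t : ℝ ↦ cexp (-(z * t)) • f t) atTop (𝓝 0) :=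
    hdecay.trans_tendsto <| Real.tendsto_exp_atBot.comp <|
      tendsto_id.const_mul_atTop_of_neg (neg_lt_zero.2 (half_pos hz))
  simpa only [add_zero] using!
    ((intervalIntegral_tendsto_integral_Ioi 0 hint tendsto_id).const_smul z).add hboundary

end LaplaceTransform

section BoundedDerivative

variable {E : Type*} [NormedAddCommGroup E]

lemma isBigO_id_of_norm_deriv_le [NormedSpace ℝ E] {f f' : ℝ → E} {X C : ℝ}
    (hd : ∀ t ≥ X, HasDerivAt f (f' t) t) (hf' : ∀ t ≥ X, ‖f' t‖ ≤ C) :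
    f =O[atTop] fun t ↦ t := by
  have hlip : (fun t ↦ f t - f X) =O[atTop] fun t ↦ t - X := by
    refine .of_bound C ?_
    filter_upwards [eventually_ge_atTop X] with t ht
    exact (convex_Ici X).norm_image_sub_le_of_norm_hasDerivWithin_le
      (fun x hx ↦ (hd x hx).hasDerivWithinAt) hf' self_mem_Ici ht
  have hsub : (fun t ↦ t - X) =O[atTop] fun t ↦ t :=
    (isBigO_refl _ _).sub (isLittleO_const_id_atTop X).isBigO
  simpa only [sub_add_cancel, id_eq] using
    (hlip.trans hsub).add (isLittleO_const_id_atTop (f X)).isBigO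

variable [NormedSpace ℂ E] [CompleteSpace E] {f f' : ℝ → E}

lemma hasDerivAt_truncatedDerivLaplace {f'₀ : E} {t : ℝ} (hf : LocallyIntegrableOn f (Ici 0))
    (ht : 0 < t) (hd : HasDerivAt f f'₀ t) (z : ℂ) :
    HasDerivAt (truncatedDerivLaplace f z) (cexp (-(z * t)) • f'₀) t := by
  have hexp : HasDerivAt (fun t : ℝ ↦ cexp (-(z * t))) (cexp (-(z * t)) * -z) t := by
    simpa using! ((hasDerivAt_id t).ofReal_comp.const_mul z).neg.cexp
  have hmeas : StronglyMeasurableAtFilter (fun t : ℝ ↦ cexp (-(z * t)) • f t) (𝓝 t) :=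
    ⟨Ici 0, Ici_mem_nhds ht,
      (locallyIntegrableOn_cexp_smul isClosed_Ici.isLocallyClosed hf z).aestronglyMeasurable⟩
  have hintegral := intervalIntegral.integral_hasDerivAt_right
    (intervalIntegrable_cexp_smul (intervalIntegrable_of_locallyIntegrableOn_Ici hf ht.le) z)
    hmeas (hexp.continuousAt.smul hd.continuousAt)
  refine ((hintegral.const_smul z).add (hexp.smul hd)).congr_deriv ?_
  module

lemma norm_truncatedDerivLaplace_sub_le {ε a b : ℝ} (hf : LocallyIntegrableOn f (Ici 0))
    (ha : 0 < a) (hab : a ≤ b) (hd : ∀ t ≥ a, HasDerivAt f (f' t) t) (hf' : ∀ t ≥ a, ‖f' t‖ ≤ ε)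
    {z : ℂ} (hz : z.re ≠ 0) :
    ‖truncatedDerivLaplace f z b - truncatedDerivLaplace f z a‖ ≤
      ε * ((Real.exp (-(z.re * a)) - Real.exp (-(z.re * b))) / z.re) := by
  have hderiv (t : ℝ) (ht : a ≤ t) :
      HasDerivAt (fun t ↦ truncatedDerivLaplace f z t - truncatedDerivLaplace f z a)
        (cexp (-(z * t)) • f' t) t :=
    (hasDerivAt_truncatedDerivLaplace hf (ha.trans_le ht) (hd t ht) z).sub_const _
  have hmajorant (t : ℝ) :
      HasDerivAt (fun t ↦ ε * ((Real.exp (-(z.re * a)) - Real.exp (-(z.re * t))) / z.re))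
        (ε * Real.exp (-(z.re * t))) t := by
    have hexp : HasDerivAt (fun t ↦ Real.exp (-(z.re * t))) (Real.exp (-(z.re * t)) * -z.re) t := by
      simpa using! ((hasDerivAt_id t).const_mul z.re).neg.exp
    refine (((hexp.const_sub _).div_const z.re).const_mul ε).congr_deriv ?_
    field_simp
  refine image_norm_le_of_norm_deriv_right_le_deriv_boundary
    (fun t ht ↦ (hderiv t ht.1).continuousAt.continuousWithinAt)
    (fun t ht ↦ (hderiv t ht.1).hasDerivWithinAt) (by simp) hmajorant (fun t ht ↦ ?_)
    (right_mem_Icc.2 hab)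
  rw [norm_smul, norm_cexp_neg_mul_ofReal, mul_comm]
  gcongr
  exact hf' t ht.1

lemma norm_truncatedDerivLaplace_sub_le_of_re_neg {ε a b : ℝ} (hf : LocallyIntegrableOn f (Ici 0))
    (ha : 0 < a) (hab : a ≤ b) (hd : ∀ t ≥ a, HasDerivAt f (f' t) t) (hf' : ∀ t ≥ a, ‖f' t‖ ≤ ε)
    {z : ℂ} (hz : z.re < 0) :
    ‖truncatedDerivLaplace f z b - truncatedDerivLaplace f z a‖ ≤
      ε * (Real.exp (-(z.re * b)) / |z.re|) := by
  have hε : 0 ≤ ε := (norm_nonneg _).trans (hf' a le_rfl)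
  refine (norm_truncatedDerivLaplace_sub_le hf ha hab hd hf' hz.ne).trans ?_
  rw [← neg_div_neg_eq, neg_sub, abs_of_neg hz]
  have hneg_re : 0 < -z.re := neg_pos.2 hz
  gcongr
  exact sub_le_self _ (Real.exp_nonneg _)

lemma norm_smul_vectorLaplace_sub_truncatedDerivLaplace_le {ε T : ℝ}
    (hf : LocallyIntegrableOn f (Ici 0)) (hT : 0 < T) (hd : ∀ t ≥ T, HasDerivAt f (f' t) t)
    (hf' : ∀ t ≥ T, ‖f' t‖ ≤ ε) {z : ℂ} (hz : 0 < z.re) :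
    ‖z • vectorLaplace f z - truncatedDerivLaplace f z T‖ ≤
      ε * (Real.exp (-(z.re * T)) / |z.re|) := by
  have hε : 0 ≤ ε := (norm_nonneg _).trans (hf' T le_rfl)
  have hlim := tendsto_truncatedDerivLaplace hf (isBigO_id_of_norm_deriv_le hd hf') hz
  refine le_of_tendsto (hlim.sub_const _).norm ?_
  filter_upwards [eventually_ge_atTop T] with S hS
  refine (norm_truncatedDerivLaplace_sub_le hf hT hS hd hf' hz.ne').trans ?_
  rw [abs_of_pos hz]
  gcongr
  exact sub_le_self _ (Real.exp_nonneg _)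

end BoundedDerivative

section Tauberian

variable {E : Type*} [NormedAddCommGroup E] [NormedSpace ℂ E] [CompleteSpace E]
  {f f' : ℝ → E} {F : ℂ → E}

lemma exists_norm_le_of_vectorLaplace_extension {R X ε : ℝ} (hR : 0 < R) (hX : 0 < X)
    (hf : LocallyIntegrableOn f (Ici 0)) (hd : ∀ t ≥ X, HasDerivAt f (f' t) t)
    (hf' : ∀ t ≥ X, ‖f' t‖ ≤ ε) (hF : DifferentiableOn ℂ F (closedBall 0 R))
    (hFeq : ∀ z ∈ closedBall 0 R, 0 < z.re → F z = vectorLaplace f z) :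
    ∃ B, ∀ T ≥ X, ‖f T‖ ≤ 2 / R * (ε + B / T) := by
  have hε : 0 ≤ ε := (norm_nonneg _).trans (hf' X le_rfl)
  have hdiff {T : ℝ} (hT : 0 < T) :
      DifferentiableOn ℂ (fun z ↦ z • F z - truncatedDerivLaplace f z T) (closedBall 0 R) :=
    (differentiableOn_id.smul hF).sub (differentiable_truncatedDerivLaplace
      (intervalIntegrable_of_locallyIntegrableOn_Ici hf hT.le)).differentiableOn
  obtain ⟨B, hB⟩ := (isCompact_closedBall (0 : ℂ) R).exists_bound_of_continuousOn
    (hdiff hX).continuousOn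
  have hB_nonneg : 0 ≤ B := (norm_nonneg _).trans (hB 0 (mem_closedBall_self hR.le))
  refine ⟨B, fun T hT ↦ ?_⟩
  have hT_pos : 0 < T := hX.trans_le hT
  suffices ‖(0 : ℂ) • F 0 - truncatedDerivLaplace f 0 T‖ ≤ 2 / R * (ε + B / T) by
    rwa [zero_smul, zero_sub, norm_neg, truncatedDerivLaplace_zero] at this
  refine norm_apply_zero_le_of_sphere_bounds
    (g := fun z ↦ z • F z - truncatedDerivLaplace f z T) hR hT_pos hε hB_nonneg
    ((hdiff hT_pos).diffContOnCl_ball subset_rfl) (fun z hz hre ↦ ?_) (fun z hz hre ↦ ?_)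
  · rw [hFeq z (sphere_subset_closedBall hz) hre]
    exact norm_smul_vectorLaplace_sub_truncatedDerivLaplace_le hf hT_pos
      (fun t ht ↦ hd t (hT.trans ht)) (fun t ht ↦ hf' t (hT.trans ht)) hre
  · rw [← sub_sub_sub_cancel_right _ _ (truncatedDerivLaplace f z X)]
    exact (norm_sub_le _ _).trans (add_le_add (hB z (sphere_subset_closedBall hz))
      (norm_truncatedDerivLaplace_sub_le_of_re_neg hf hX hT hd hf' hre))

theorem finite_form_ingham_karamata_general (hf : LocallyIntegrableOn f (Ici 0))
    (hd : ∀ᶠ t in atTop, HasDerivAt f (f' t) t) (hf' : Tendsto f' atTop (𝓝 0))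
    (hF : AnalyticAt ℂ F 0) (hFeq : ∀ᶠ z in 𝓝[{z | 0 < z.re}] 0, F z = vectorLaplace f z) :
    Tendsto f atTop (𝓝 0) := by
  obtain ⟨R, hR, hball⟩ := nhds_basis_closedBall.eventually_iff.1
    (hF.eventually_analyticAt.and (eventually_nhdsWithin_iff.1 hFeq))
  refine NormedAddGroup.tendsto_nhds_zero.2 fun η hη ↦ ?_
  have hε : 0 < R * η / 4 := by positivity
  obtain ⟨X, hX⟩ := eventually_atTop.1 ((eventually_gt_atTop 0).and <|
    hd.and (hf'.norm.eventually_le_const (by rwa [norm_zero])))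
  obtain ⟨B, hB⟩ := exists_norm_le_of_vectorLaplace_extension hR (hX X le_rfl).1 hf
    (fun t ht ↦ (hX t ht).2.1) (fun t ht ↦ (hX t ht).2.2)
    (fun z hz ↦ (hball hz).1.differentiableAt.differentiableWithinAt) (fun z hz ↦ (hball hz).2)
  have hlim : Tendsto (fun T ↦ 2 / R * (R * η / 4 + B / T)) atTop
      (𝓝 (2 / R * (R * η / 4 + 0))) :=
    ((tendsto_const_nhds.div_atTop tendsto_id).const_add _).const_mul _
  have hlt : 2 / R * (R * η / 4 + 0) < η := by
    field_simp
    linarith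
  filter_upwards [eventually_ge_atTop X, hlim.eventually_lt_const hlt] with T hT hsmall
  exact (hB T hT).trans_lt hsmall

end Tauberian

section Rectangle

variable {α r : ℝ}

lemma isOpen_Ropen : IsOpen (Ropen α r) :=
  (isOpen_lt continuous_const continuous_re).inter <|
    (isOpen_lt continuous_re continuous_const).inter <|
      isOpen_lt (continuous_abs.comp continuous_im) continuous_const

lemma Ropen_mem_nhds_zero (hα : α < 0) (hr : 0 < r) : Ropen α r ∈ 𝓝 0 :=
  isOpen_Ropen.mem_nhds ⟨hα, zero_lt_one, by simpa using hr⟩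

lemma Ropen_subset_Rbar : Ropen α r ⊆ Rbar α r :=
  fun _ hz ↦ ⟨hz.1.le, hz.2.1.le, hz.2.2.le⟩

end Rectangle

/-- Finite-form Ingham–Karamata theorem: if `τ ∈ C¹[0,∞)` with `τ'(x) → 0` and
its Laplace transform has an analytic extension to the open rectangle `R_{α,r}`
which is continuous on `R̄_{α,r}`, then `τ(x) → 0` as `x → ∞`. -/
theorem finite_form_ingham_karamata
    (α r : ℝ) (hα : α < 0) (hr : 0 < r)
    (τ τ' : ℝ → ℂ) (F : ℂ → ℂ)
    (hder : ∀ x ∈ Set.Ici (0 : ℝ), HasDerivWithinAt τ (τ' x) (Set.Ici 0) x)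
    (hcont : ContinuousOn τ' (Set.Ici 0))
    (hto0 : Tendsto τ' atTop (nhds 0))
    (hFan : DifferentiableOn ℂ F (Ropen α r))
    (hFcont : ContinuousOn F (Rbar α r))
    (hFeq : ∀ s ∈ Rbar α r, 0 < s.re → F s = Laplace τ s) :
    Tendsto τ atTop (nhds 0) := by
  have hτ : ContinuousOn τ (Ici 0) := fun x hx ↦ (hder x hx).continuousWithinAt
  have hR : Ropen α r ∈ 𝓝 0 := Ropen_mem_nhds_zero hα hr
  refine finite_form_ingham_karamata_general (hτ.locallyIntegrableOn measurableSet_Ici) ?_ hto0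
    (hFan.analyticAt hR) ?_
  · filter_upwards [eventually_gt_atTop 0] with x hx
    exact (hder x hx.le).hasDerivAt (Ici_mem_nhds hx)
  · filter_upwards [self_mem_nhdsWithin, mem_nhdsWithin_of_mem_nhds hR] with s hre hs
    rw [vectorLaplace_eq_Laplace, hFeq s (Ropen_subset_Rbar hs) hre]
end
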